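/- With probability at least 1 − δ over the i.i.d. draw of the sample D = (x_1,…,x_l) from P, the following holds: if the entries of D are pairwise distinct, then every f ∈ F satisfies R(f) ≤ R(f,D,L) + c₁·√(1 − ei(𝐑_{F,D},0)/l) + c₂·√((1 − log₂ δ)/l), where L = (σ*(x_1),…,σ*(x_l)), c₁ = √(6/log₂ e) = √(6·ln 2) and c₂ = √(1/log₂ e) = √(ln 2). -/

import Mathlib

open Classical Finset

/-- True risk of `f` as an approximation of the supervisor `σs`, with respect
to distribution `p` on `X`. -/
noncomputable def risk {X : Type*} [Fintype X] (p : X → ℝ) (σs f : X → Bool) : ℝ :=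
  ∑ x, (if f x ≠ σs x then (1 : ℝ) else 0) * p x

/-- Empirical risk of `f` on data `D` with labels `L`. -/
noncomputable def empRisk {X : Type*} {l : ℕ} (f : X → Bool)
    (D : Fin l → X) (L : Fin l → Bool) : ℝ :=
  (1 / l : ℝ) * ∑ i, if f (D i) ≠ L i then (1 : ℝ) else 0

/-- The min-risk: the minimum of the empirical risk over the repertoire `F`,
with labels produced by supervisor `σ`. -/
noncomputable def minRisk {X : Type*} {l : ℕ}
    (F : Finset (X → Bool)) (hF : F.Nonempty) (D : Fin l → X) (σ : X → Bool) : ℝ :=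
  F.inf' hF (fun f => empRisk f D (fun i => σ (D i)))

/-- Effective information generated by a function `g` between finite sets
outputting `b`: `log₂ |domain| - log₂ |g⁻¹(b)|`. -/
noncomputable def ei {A B : Type*} [Fintype A] (g : A → B) (b : B) : ℝ :=
  Real.logb 2 (Fintype.card A) -
    Real.logb 2 ((Finset.univ.filter (fun a => g a = b)).card)

/-!
Let `Z D` be the largest deviation of a true risk above the empirical risk on `D`. Were the event
that `Z` exceeds its bound of probability more than `exp (-u)`, conditioning on it would give an
exchangeable weight `v` on samples with `v ≤ exp u * p^⊗n`, under which the mean of `Z` exceeds the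
mean of the bound. It does not. By exchangeability the mean of `Z` only grows when `Z` is computed
from a first block of `k` points. Let `g` attain the maximum on that block and compare it with the
other points:

* given the first block the other `m` points are independent of `g`, so Hoeffding's inequality
  bounds the mean of the true risk of `g` minus its average over them by `√(u / (2 * m))`, the
  factor `exp u` entering an exponential moment only as the summand `u` of its logarithm;
* by exchangeability the average over the other points may be taken over a second block of `k`
  points. Swapping random pairs between the two blocks turns what remains into a Rademacher
  average over the `N` patterns on the sample, at most `√(2 * log N / k)`.

With `k = n / 2` this yields `√(6 * log N / n) + √(u / n)`. Finally, the min-risk vanishes at every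
`σ` that agrees on `D` with a member of `F`. There are at least `N * 2 ^ (|X| - n)` of these, so
`ei` is at most `n - log₂ N`.

Means under a weight `v` are written `v ⬝ᵥ Z`, averages over the sample `𝔼 i, a i`.
-/

section UniformDeviation

open Real Matrix
open scoped BigOperators

section ExponentialMoments

variable {Ω : Type*} [Fintype Ω] {v w Z : Ω → ℝ} {a b u : ℝ}

theorem dotProduct_const_of_mem_stdSimplex (hv : v ∈ stdSimplex ℝ Ω) (c : ℝ) :
    v ⬝ᵥ (fun _ ↦ c) = c := by
  rw [dotProduct, ← sum_mul, hv.2, one_mul]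

theorem le_sqrt_of_forall_mul_le {x : ℝ} (hb : 0 < b)
    (h : ∀ t, 0 < t → t * x ≤ a + b * t ^ 2) : x ≤ √(4 * a * b) := by
  rcases le_or_gt x 0 with hx | hx
  · exact hx.trans (sqrt_nonneg _)
  have hopt := h (x / (2 * b)) (by positivity)
  have hsq : x / (2 * b) * x - b * (x / (2 * b)) ^ 2 = x ^ 2 / (4 * b) := by field_simp; ring
  have hle : x ^ 2 / (4 * b) ≤ a := by linarith
  rw [div_le_iff₀ (by positivity)] at hle
  exact le_sqrt_of_sq_le (by linarith)

theorem dotProduct_le_sqrt_of_mgf_le (hv : v ∈ stdSimplex ℝ Ω) (hb : 0 < b)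
    (h : ∀ t, 0 < t → v ⬝ᵥ (fun ω ↦ exp (t * Z ω)) ≤ exp (a + b * t ^ 2)) :
    v ⬝ᵥ Z ≤ √(4 * a * b) := by
  refine le_sqrt_of_forall_mul_le hb fun t ht ↦ exp_le_exp.mp ?_
  have jensen := convexOn_exp.map_sum_le (t := univ) (p := fun ω ↦ t * Z ω)
    (fun ω _ ↦ hv.1 ω) hv.2 (fun _ _ ↦ Set.mem_univ _)
  calc exp (t * v ⬝ᵥ Z) = exp (∑ ω, v ω • (t * Z ω)) := by
        simp only [dotProduct, mul_sum, smul_eq_mul, mul_left_comm]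
    _ ≤ v ⬝ᵥ (fun ω ↦ exp (t * Z ω)) := jensen
    _ ≤ exp (a + b * t ^ 2) := h t ht

theorem dotProduct_le_sqrt_of_mgf_le_of_le_exp_mul (hv : v ∈ stdSimplex ℝ Ω)
    (hvw : ∀ ω, v ω ≤ exp u * w ω) (hb : 0 < b)
    (h : ∀ t, w ⬝ᵥ (fun ω ↦ exp (t * Z ω)) ≤ exp (b * t ^ 2)) :
    v ⬝ᵥ Z ≤ √(4 * u * b) := by
  refine dotProduct_le_sqrt_of_mgf_le hv hb fun t _ ↦ ?_
  calc v ⬝ᵥ (fun ω ↦ exp (t * Z ω))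
      ≤ (exp u • w) ⬝ᵥ (fun ω ↦ exp (t * Z ω)) :=
        dotProduct_le_dotProduct_of_nonneg_right hvw fun _ ↦ (exp_pos _).le
    _ = exp u * w ⬝ᵥ (fun ω ↦ exp (t * Z ω)) := smul_dotProduct _ _ _
    _ ≤ exp u * exp (b * t ^ 2) := by gcongr; exact h t
    _ = exp (u + b * t ^ 2) := (exp_add _ _).symm

end ExponentialMoments

section Rademacher

variable {κ : Type*} [Fintype κ] [DecidableEq κ]

theorem expect_exp_sum_rademacher_le (c : κ → ℝ) :
    𝔼 ε : κ → ℤˣ, exp (∑ i, ((ε i : ℤ) : ℝ) * c i) ≤ exp ((∑ i, c i ^ 2) / 2) := by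
  calc 𝔼 ε : κ → ℤˣ, exp (∑ i, ((ε i : ℤ) : ℝ) * c i)
      = (∏ i, ∑ e : ℤˣ, exp (((e : ℤ) : ℝ) * c i)) / 2 ^ Fintype.card κ := by
        rw [Fintype.expect_eq_sum_div_card, prod_univ_sum, Fintype.piFinset_univ]
        simp only [exp_sum, Fintype.card_pi, Fintype.card_units_int, prod_const, card_univ,
          Nat.cast_pow, Nat.cast_ofNat]
    _ = ∏ i, cosh (c i) := by
        rw [← card_univ, ← prod_const, ← prod_div_distrib]
        refine prod_congr rfl fun i _ ↦ ?_
        simp [cosh_eq]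
    _ ≤ ∏ i, exp (c i ^ 2 / 2) :=
        prod_le_prod (fun i _ ↦ (cosh_pos _).le) fun i _ ↦ cosh_le_exp_half_sq _
    _ = exp ((∑ i, c i ^ 2) / 2) := by rw [← exp_sum, sum_div]

theorem expect_exp_mul_expect_rademacher_le [Nonempty κ] {c : κ → ℝ} (hc : ∀ i, |c i| ≤ 1)
    (t : ℝ) :
    𝔼 ε : κ → ℤˣ, exp (t * 𝔼 i, ((ε i : ℤ) : ℝ) * c i)
      ≤ exp (1 / (2 * Fintype.card κ) * t ^ 2) := by
  set k : ℝ := (Fintype.card κ : ℝ) with hk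
  have hk0 : 0 < k := by rw [hk]; exact_mod_cast Fintype.card_pos
  have hle (i : κ) : (t / k * c i) ^ 2 ≤ (t / k) ^ 2 := by
    rw [mul_pow]
    exact mul_le_of_le_one_right (sq_nonneg _) ((sq_le_one_iff_abs_le_one _).mpr (hc i))
  calc 𝔼 ε : κ → ℤˣ, exp (t * 𝔼 i, ((ε i : ℤ) : ℝ) * c i)
      = 𝔼 ε : κ → ℤˣ, exp (∑ i, ((ε i : ℤ) : ℝ) * (t / k * c i)) := by
        refine expect_congr rfl fun ε _ ↦ congrArg exp ?_
        rw [Fintype.expect_eq_sum_div_card, ← hk, mul_div_assoc', mul_div_right_comm, mul_sum]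
        exact sum_congr rfl fun i _ ↦ by ring
    _ ≤ exp ((∑ i, (t / k * c i) ^ 2) / 2) := expect_exp_sum_rademacher_le _
    _ ≤ exp ((∑ _i : κ, (t / k) ^ 2) / 2) := by gcongr exp ((∑ i, ?_) / 2); exact hle _
    _ = exp (1 / (2 * k) * t ^ 2) := by
        rw [sum_const, card_univ, nsmul_eq_mul, ← hk]
        congr 1
        field_simp

theorem expect_sup'_rademacher_le [Nonempty κ] {S : Finset (κ → ℝ)} (hS : S.Nonempty)
    (hS1 : ∀ c ∈ S, ∀ i, |c i| ≤ 1) :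
    𝔼 ε : κ → ℤˣ, S.sup' hS (fun c ↦ 𝔼 i, ((ε i : ℤ) : ℝ) * c i)
      ≤ √(2 * log #S / Fintype.card κ) := by
  set M : (κ → ℤˣ) → ℝ := fun ε ↦ S.sup' hS (fun c ↦ 𝔼 i, ((ε i : ℤ) : ℝ) * c i) with hM
  let v : (κ → ℤˣ) → ℝ := fun _ ↦ (Fintype.card (κ → ℤˣ) : ℝ)⁻¹
  have hv_dot (Φ : (κ → ℤˣ) → ℝ) : v ⬝ᵥ Φ = 𝔼 ε, Φ ε := by
    rw [Fintype.expect_eq_sum_div_card, div_eq_inv_mul, mul_sum, dotProduct]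
  have hv : v ∈ stdSimplex ℝ (κ → ℤˣ) := by
    refine ⟨fun _ ↦ by positivity, ?_⟩
    rw [← dotProduct_one, hv_dot]
    exact Fintype.expect_one
  have hS0 : (0 : ℝ) < #S := by exact_mod_cast hS.card_pos
  have : (0 : ℝ) < Fintype.card κ := by exact_mod_cast Fintype.card_pos
  have hmgf (t : ℝ) (_ : 0 < t) : v ⬝ᵥ (fun ε ↦ exp (t * M ε))
      ≤ exp (log #S + 1 / (2 * Fintype.card κ) * t ^ 2) := by
    calc v ⬝ᵥ (fun ε ↦ exp (t * M ε)) = 𝔼 ε, exp (t * M ε) := hv_dot _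
      _ ≤ 𝔼 ε : κ → ℤˣ, ∑ c ∈ S, exp (t * 𝔼 i, ((ε i : ℤ) : ℝ) * c i) := by
          refine expect_le_expect fun ε _ ↦ ?_
          obtain ⟨c, hc, hMc⟩ := exists_mem_eq_sup' hS fun c ↦ 𝔼 i, ((ε i : ℤ) : ℝ) * c i
          simp only [hM, hMc]
          exact single_le_sum (f := fun c ↦ exp (t * 𝔼 i, ((ε i : ℤ) : ℝ) * c i))
            (fun _ _ ↦ (exp_pos _).le) hc
      _ = ∑ c ∈ S, 𝔼 ε : κ → ℤˣ, exp (t * 𝔼 i, ((ε i : ℤ) : ℝ) * c i) := expect_sum_comm _ _ _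
      _ ≤ ∑ _c ∈ S, exp (1 / (2 * Fintype.card κ) * t ^ 2) :=
          sum_le_sum fun c hc ↦ expect_exp_mul_expect_rademacher_le (hS1 c hc) t
      _ = exp (log #S + 1 / (2 * Fintype.card κ) * t ^ 2) := by
          rw [sum_const, nsmul_eq_mul, exp_add, exp_log hS0]
  have hmax := dotProduct_le_sqrt_of_mgf_le hv (by positivity) hmgf
  rw [hv_dot] at hmax
  convert hmax using 2
  ring

end Rademacher

section Samples

variable {X ι κ : Type*} [Fintype ι] {p : X → ℝ}

/-- The weight `p^⊗ι` of a sample drawn independently from `p`. -/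
noncomputable def prodWeight (p : X → ℝ) (D : ι → X) : ℝ :=
  ∏ i, p (D i)

/-- The average of `g` over the sample `D`. For the `0`-`1` loss it is the empirical risk. -/
noncomputable def empMean (g : X → ℝ) (D : ι → X) : ℝ :=
  𝔼 i, g (D i)

theorem prodWeight_comp_equiv [Fintype κ] (D : ι → X) (e : κ ≃ ι) :
    prodWeight p (D ∘ e) = prodWeight p D :=
  e.prod_comp fun i ↦ p (D i)

theorem empMean_comp_equiv [Fintype κ] (g : X → ℝ) (D : ι → X) (e : κ ≃ ι) :
    empMean g (D ∘ e) = empMean g D :=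
  Fintype.expect_equiv e _ _ fun _ ↦ rfl

theorem empMean_mem_Icc [Nonempty ι] {g : X → ℝ} (hg : ∀ x, g x ∈ Set.Icc (0 : ℝ) 1)
    (D : ι → X) : empMean g D ∈ Set.Icc (0 : ℝ) 1 :=
  ⟨expect_nonneg fun _ _ ↦ (hg _).1, expect_le univ_nonempty fun _ _ ↦ (hg _).2⟩

end Samples

section Hoeffding

variable {X ι κ μ : Type*} [Fintype X] {p : X → ℝ}

theorem dotProduct_exp_deviation_le (hp : p ∈ stdSimplex ℝ X) {g : X → ℝ}
    (hg : ∀ x, g x ∈ Set.Icc (0 : ℝ) 1) (t : ℝ) :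
    p ⬝ᵥ (fun x ↦ exp (t * (p ⬝ᵥ g - g x))) ≤ exp (t ^ 2 / 8) := by
  let _ : MeasurableSpace X := ⊤
  let P : MeasureTheory.Measure X := ∑ x, ENNReal.ofReal (p x) • MeasureTheory.Measure.dirac x
  have : MeasureTheory.IsProbabilityMeasure P := by
    constructor
    simp only [P, MeasureTheory.Measure.coe_finsetSum, MeasureTheory.Measure.coe_smul,
      Finset.sum_apply, Pi.smul_apply, MeasureTheory.measure_univ, smul_eq_mul, mul_one]
    rw [← ENNReal.ofReal_sum_of_nonneg (fun x _ ↦ hp.1 x), hp.2, ENNReal.ofReal_one]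
  have integral_P (h : X → ℝ) : ∫ x, h x ∂P = p ⬝ᵥ h := by
    rw [MeasureTheory.integral_finsetSum_measure fun x _ ↦
      MeasureTheory.Integrable.of_finite.smul_measure ENNReal.ofReal_ne_top]
    refine sum_congr rfl fun x _ ↦ ?_
    rw [MeasureTheory.integral_smul_measure, MeasureTheory.integral_dirac,
      ENNReal.toReal_ofReal (hp.1 x), smul_eq_mul]
  have hmgf := (ProbabilityTheory.hasSubgaussianMGF_of_mem_Icc (μ := P)
    measurable_from_top.aemeasurable (.of_forall hg)).mgf_le (-t)
  rw [ProbabilityTheory.mgf, integral_P, integral_P] at hmgf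
  convert hmgf using 1
  · simp only [neg_mul, ← mul_neg, neg_sub]
  · simp only [sub_zero, nnnorm_one, NNReal.coe_pow, NNReal.coe_div, NNReal.coe_one,
      NNReal.coe_ofNat]
    congr 1
    ring

variable [Fintype ι] [Fintype κ] [Fintype μ] [DecidableEq ι] [DecidableEq κ] [DecidableEq μ]

theorem prodWeight_mem_stdSimplex (hp : p ∈ stdSimplex ℝ X) :
    prodWeight p ∈ stdSimplex ℝ (ι → X) := by
  refine ⟨fun D ↦ prod_nonneg fun i _ ↦ hp.1 _, ?_⟩
  simp only [prodWeight]
  rw [← Fintype.piFinset_univ, ← prod_univ_sum (fun _ ↦ univ) (fun _ x ↦ p x), hp.2, prod_const_one]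

theorem prodWeight_dotProduct_exp_deviation_le [Nonempty ι] (hp : p ∈ stdSimplex ℝ X) {g : X → ℝ}
    (hg : ∀ x, g x ∈ Set.Icc (0 : ℝ) 1) (t : ℝ) :
    prodWeight p ⬝ᵥ (fun D : ι → X ↦ exp (t * (p ⬝ᵥ g - empMean g D)))
      ≤ exp (1 / (8 * Fintype.card ι) * t ^ 2) := by
  set n : ℝ := (Fintype.card ι : ℝ) with hn
  have hn0 : 0 < n := by rw [hn]; exact_mod_cast Fintype.card_pos
  calc prodWeight p ⬝ᵥ (fun D : ι → X ↦ exp (t * (p ⬝ᵥ g - empMean g D)))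
      = ∏ _i : ι, p ⬝ᵥ (fun x ↦ exp (t / n * (p ⬝ᵥ g - g x))) := by
        simp only [dotProduct, prod_univ_sum, Fintype.piFinset_univ, prodWeight, prod_mul_distrib]
        refine sum_congr rfl fun D _ ↦ ?_
        rw [← exp_sum, ← mul_sum, sum_sub_distrib, sum_const, card_univ, nsmul_eq_mul, ← hn,
          empMean, Fintype.expect_eq_sum_div_card, ← hn]
        congr 2
        field_simp
    _ ≤ ∏ _i : ι, exp ((t / n) ^ 2 / 8) :=
        prod_le_prod (fun _ _ ↦ dotProduct_nonneg_of_nonneg hp.1 fun _ ↦ (exp_pos _).le)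
          fun _ _ ↦ dotProduct_exp_deviation_le hp hg _
    _ = exp (1 / (8 * n) * t ^ 2) := by
        rw [prod_const, card_univ, ← exp_nat_mul, ← hn]
        congr 1
        field_simp

theorem prodWeight_dotProduct_sum (Φ : (κ → X) → (μ → X) → ℝ) :
    prodWeight p ⬝ᵥ (fun D : κ ⊕ μ → X ↦ Φ (D ∘ Sum.inl) (D ∘ Sum.inr))
      = prodWeight p ⬝ᵥ fun y ↦ prodWeight p ⬝ᵥ Φ y := by
  simp only [dotProduct, mul_sum, ← Fintype.sum_prod_type', ← mul_assoc]
  refine Fintype.sum_equiv (Equiv.sumArrowEquivProdArrow κ μ X) _ _ fun D ↦ ?_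
  rw [prodWeight, Fintype.prod_sum_type]
  rfl

theorem dotProduct_deviation_inr_le [Nonempty μ] (hp : p ∈ stdSimplex ℝ X)
    {v : (κ ⊕ μ → X) → ℝ} (hv : v ∈ stdSimplex ℝ (κ ⊕ μ → X)) {u : ℝ}
    (hvp : ∀ D, v D ≤ exp u * prodWeight p D) {g : (κ → X) → X → ℝ}
    (hg : ∀ y x, g y x ∈ Set.Icc (0 : ℝ) 1) :
    v ⬝ᵥ (fun D ↦ p ⬝ᵥ g (D ∘ Sum.inl) - empMean (g (D ∘ Sum.inl)) (D ∘ Sum.inr))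
      ≤ √(u / (2 * Fintype.card μ)) := by
  have : (0 : ℝ) < Fintype.card μ := by exact_mod_cast Fintype.card_pos
  have hmgf (t : ℝ) : prodWeight p ⬝ᵥ (fun D : κ ⊕ μ → X ↦
      exp (t * (p ⬝ᵥ g (D ∘ Sum.inl) - empMean (g (D ∘ Sum.inl)) (D ∘ Sum.inr))))
      ≤ exp (1 / (8 * Fintype.card μ) * t ^ 2) := by
    rw [prodWeight_dotProduct_sum fun y z ↦ exp (t * (p ⬝ᵥ g y - empMean (g y) z)),
      ← dotProduct_const_of_mem_stdSimplex (prodWeight_mem_stdSimplex (ι := κ) hp) (exp _)]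
    exact dotProduct_le_dotProduct_of_nonneg_left
      (fun y ↦ prodWeight_dotProduct_exp_deviation_le hp (hg y) t)
      (prodWeight_mem_stdSimplex hp).1
  convert dotProduct_le_sqrt_of_mgf_le_of_le_exp_mul hv hvp (by positivity) hmgf using 2
  field_simp
  ring

end Hoeffding

section MaxDeviation

variable {X ι κ : Type*} [Fintype X] [Fintype ι] [Fintype κ]

/-- The largest amount by which the mean of a member of the class `G` exceeds its average over the
sample `D`. -/
noncomputable def maxDeviation (p : X → ℝ) {G : Finset (X → ℝ)} (hG : G.Nonempty) (D : ι → X) : ℝ :=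
  G.sup' hG fun g ↦ p ⬝ᵥ g - empMean g D

/-- The distinct restrictions to the sample `D` of members of the class `G`. The base-`2` logarithm
of their number is the empirical VC entropy of `G` on `D`. -/
noncomputable def patterns {X ι β : Type*} (G : Finset (X → β)) (D : ι → X) : Finset (ι → β) :=
  G.image (· ∘ D)

variable {p : X → ℝ} {G : Finset (X → ℝ)} (hG : G.Nonempty)

theorem maxDeviation_comp_equiv (D : ι → X) (e : κ ≃ ι) :
    maxDeviation p hG (D ∘ e) = maxDeviation p hG D := by
  simp only [maxDeviation, empMean_comp_equiv]

theorem mem_patterns {X ι β : Type*} {G : Finset (X → β)} {D : ι → X} {b : ι → β} :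
    b ∈ patterns G D ↔ ∃ f ∈ G, f ∘ D = b :=
  mem_image

theorem comp_mem_patterns {X ι β : Type*} {G : Finset (X → β)} {f : X → β} (hf : f ∈ G)
    (D : ι → X) : f ∘ D ∈ patterns G D :=
  mem_image_of_mem _ hf

theorem patterns_nonempty {X ι β : Type*} {G : Finset (X → β)} (hG : G.Nonempty) (D : ι → X) :
    (patterns G D).Nonempty :=
  hG.image _

theorem card_patterns_comp_equiv {X ι κ β : Type*} (G : Finset (X → β)) (D : ι → X) (e : κ ≃ ι) :
    #(patterns G (D ∘ e)) = #(patterns G D) := by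
  have : patterns G (D ∘ e) = (patterns G D).image (· ∘ e) := by
    rw [patterns, patterns, image_image]
    rfl
  rw [this, card_image_of_injective _ e.surjective.injective_comp_right]

end MaxDeviation

section Exchangeable

variable {X ι κ μ ν : Type*} [Fintype ι] [Fintype κ] [Fintype μ] [Fintype ν]

/-- A weight on samples is exchangeable if it does not depend on the order of the sample points. -/
def Exchangeable {X ι : Type*} (v : (ι → X) → ℝ) : Prop :=
  ∀ (τ : Equiv.Perm ι) (D : ι → X), v (D ∘ τ) = v D

variable [DecidableEq ι] [DecidableEq κ] [DecidableEq μ]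

theorem Exchangeable.dotProduct_expect_comp [Fintype X] {α : Type*} [Fintype α] [Nonempty α]
    {v : (ι → X) → ℝ} (hv : Exchangeable v) (τ : α → Equiv.Perm ι) (Φ : (ι → X) → ℝ) :
    v ⬝ᵥ (fun D ↦ 𝔼 a, Φ (D ∘ τ a)) = v ⬝ᵥ Φ := by
  have dotProduct_comp (σ : Equiv.Perm ι) : v ⬝ᵥ (fun D ↦ Φ (D ∘ σ)) = v ⬝ᵥ Φ := by
    conv_lhs => rw [← funext (hv σ)]
    exact comp_equiv_dotProduct_comp_equiv v Φ (σ.symm.arrowCongr (Equiv.refl X))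
  calc v ⬝ᵥ (fun D ↦ 𝔼 a, Φ (D ∘ τ a)) = 𝔼 a, v ⬝ᵥ (fun D ↦ Φ (D ∘ τ a)) := by
        simp only [dotProduct, mul_expect, expect_sum_comm]
    _ = v ⬝ᵥ Φ := by simp only [dotProduct_comp, Fintype.expect_const]

theorem expect_perm_apply (a : ι → ℝ) (j : ι) : 𝔼 τ : Equiv.Perm ι, a (τ j) = 𝔼 i, a i := by
  have : Nonempty ι := ⟨j⟩
  have apply_eq (i : ι) : 𝔼 τ : Equiv.Perm ι, a (τ i) = 𝔼 τ : Equiv.Perm ι, a (τ j) :=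
    Fintype.expect_equiv (Equiv.mulRight (Equiv.swap i j)) _ _ fun τ ↦ by simp
  calc 𝔼 τ : Equiv.Perm ι, a (τ j) = 𝔼 i, 𝔼 τ : Equiv.Perm ι, a (τ i) := by
        simp only [apply_eq, Fintype.expect_const]
    _ = 𝔼 τ : Equiv.Perm ι, 𝔼 i, a (τ i) := expect_comm _ _ _
    _ = 𝔼 i, a i := by
        have expect_comp (τ : Equiv.Perm ι) : 𝔼 i, a (τ i) = 𝔼 i, a i :=
          Fintype.expect_equiv τ _ _ fun _ ↦ rfl
        simp only [expect_comp, Fintype.expect_const]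

theorem expect_empMean_comp_perm [Nonempty ν] (g : X → ℝ) (D : ι → X) (j : ν → ι) :
    𝔼 τ : Equiv.Perm ι, empMean g (D ∘ τ ∘ j) = empMean g D := by
  simp only [empMean, Function.comp_apply]
  rw [expect_comm]
  simp only [expect_perm_apply fun i ↦ g (D i), Fintype.expect_const]

theorem Exchangeable.dotProduct_maxDeviation_le_comp [Fintype X] [Nonempty ν] {p : X → ℝ}
    {G : Finset (X → ℝ)} (hG : G.Nonempty) {v : (ι → X) → ℝ} (hv : Exchangeable v) (hv0 : 0 ≤ v)
    (j : ν → ι) :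
    v ⬝ᵥ maxDeviation p hG ≤ v ⬝ᵥ fun D ↦ maxDeviation p hG (D ∘ j) := by
  rw [← hv.dotProduct_expect_comp id fun D ↦ maxDeviation p hG (D ∘ j)]
  refine dotProduct_le_dotProduct_of_nonneg_left (fun D ↦ sup'_le _ _ fun g hg ↦ ?_) hv0
  calc p ⬝ᵥ g - empMean g D
      = 𝔼 τ : Equiv.Perm ι, (p ⬝ᵥ g - empMean g (D ∘ τ ∘ j)) := by
        rw [expect_sub_distrib, Fintype.expect_const, expect_empMean_comp_perm]
    _ ≤ 𝔼 τ : Equiv.Perm ι, maxDeviation p hG (D ∘ τ ∘ j) :=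
        expect_le_expect fun τ _ ↦ le_sup' (fun g ↦ p ⬝ᵥ g - empMean g (D ∘ τ ∘ j)) hg

theorem Exchangeable.dotProduct_empMean_inr_comp [Fintype X] [Nonempty ν]
    {v : (κ ⊕ μ → X) → ℝ} (hv : Exchangeable v) (g : (κ → X) → X → ℝ) (j : ν → μ) :
    v ⬝ᵥ (fun D ↦ empMean (g (D ∘ Sum.inl)) (D ∘ Sum.inr ∘ j))
      = v ⬝ᵥ fun D ↦ empMean (g (D ∘ Sum.inl)) (D ∘ Sum.inr) := by
  rw [← hv.dotProduct_expect_comp (fun τ : Equiv.Perm μ ↦ Equiv.sumCongr 1 τ)]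
  congr 1 with D
  exact expect_empMean_comp_perm (g (D ∘ Sum.inl)) (D ∘ Sum.inr) j

end Exchangeable

section Symmetrization

variable {X κ ρ : Type*}

/-- Exchanges the points `i` of the two blocks `κ` for every `i` with `ε i = -1`. -/
def blockSwap (ε : κ → ℤˣ) : Equiv.Perm (κ ⊕ (κ ⊕ ρ)) :=
  Function.Involutive.toPerm
    (Sum.elim (fun i ↦ if ε i = 1 then .inl i else .inr (.inl i))
      (Sum.elim (fun i ↦ if ε i = 1 then .inr (.inl i) else .inl i) fun j ↦ .inr (.inr j))) <| by
    rintro (i | i | j)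
    · by_cases h : ε i = 1 <;> simp [h]
    · by_cases h : ε i = 1 <;> simp [h]
    · rfl

theorem blockSwap_inl (ε : κ → ℤˣ) (i : κ) :
    blockSwap (ρ := ρ) ε (.inl i) = if ε i = 1 then .inl i else .inr (.inl i) :=
  rfl

theorem blockSwap_inr_inl (ε : κ → ℤˣ) (i : κ) :
    blockSwap (ρ := ρ) ε (.inr (.inl i)) = if ε i = 1 then .inr (.inl i) else .inl i :=
  rfl

theorem sub_comp_blockSwap (g : X → ℝ) (D : κ ⊕ (κ ⊕ ρ) → X) (ε : κ → ℤˣ) (i : κ) :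
    g (D (blockSwap ε (.inr (.inl i)))) - g (D (blockSwap ε (.inl i)))
      = ((ε i : ℤ) : ℝ) * (g (D (.inr (.inl i))) - g (D (.inl i))) := by
  rcases Int.units_eq_one_or (ε i) with h | h <;> simp [blockSwap_inl, blockSwap_inr_inl, h]

variable [Fintype κ]

/-- The largest amount by which the average over the second block `κ` of a member of the class `G`
exceeds its average over the first block `κ`. -/
noncomputable def blockGap {G : Finset (X → ℝ)} (hG : G.Nonempty) (D : κ ⊕ (κ ⊕ ρ) → X) : ℝ :=
  G.sup' hG fun g ↦ empMean g (D ∘ Sum.inr ∘ Sum.inl) - empMean g (D ∘ Sum.inl)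

theorem expect_blockGap_blockSwap_le [DecidableEq κ] [Nonempty κ] {G : Finset (X → ℝ)}
    (hG : G.Nonempty) (hG1 : ∀ g ∈ G, ∀ x, g x ∈ Set.Icc (0 : ℝ) 1) (D : κ ⊕ (κ ⊕ ρ) → X) :
    𝔼 ε : κ → ℤˣ, blockGap hG (D ∘ blockSwap ε)
      ≤ √(2 * log #(patterns G D) / Fintype.card κ) := by
  let diff (c : κ ⊕ (κ ⊕ ρ) → ℝ) : κ → ℝ := fun i ↦ c (.inr (.inl i)) - c (.inl i)
  let S : Finset (κ → ℝ) := (patterns G D).image diff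
  have hS : S.Nonempty := (patterns_nonempty hG D).image _
  have hS1 : ∀ c ∈ S, ∀ i, |c i| ≤ 1 := by
    simp only [S, patterns, mem_image, exists_exists_and_eq_and, forall_exists_index, and_imp]
    rintro _ g hg rfl i
    have hr := hG1 g hg (D (.inr (.inl i)))
    have hl := hG1 g hg (D (.inl i))
    exact abs_le.mpr ⟨by simp only [diff, Function.comp_apply]; linarith [hr.1, hl.2],
      by simp only [diff, Function.comp_apply]; linarith [hr.2, hl.1]⟩
  have blockGap_eq (ε : κ → ℤˣ) :
      blockGap hG (D ∘ blockSwap ε) = S.sup' hS fun c ↦ 𝔼 i, ((ε i : ℤ) : ℝ) * c i := by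
    simp only [blockGap, S, patterns, sup'_image, empMean, ← expect_sub_distrib, Function.comp_def,
      sub_comp_blockSwap, diff]
  have hcard : #S ≤ #(patterns G D) := card_image_le
  simp only [blockGap_eq]
  refine (expect_sup'_rademacher_le hS hS1).trans ?_
  have : (0 : ℝ) < #S := by exact_mod_cast hS.card_pos
  gcongr

end Symmetrization

section TailBound

variable {X ι κ ρ : Type*} [Fintype X] {p : X → ℝ} {G : Finset (X → ℝ)} {u : ℝ}

theorem dotProduct_maxDeviation_le_of_blocks [Fintype κ] [Fintype ρ] [DecidableEq κ]
    [DecidableEq ρ] [Nonempty κ] (hp : p ∈ stdSimplex ℝ X) (hG : G.Nonempty)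
    (hG1 : ∀ g ∈ G, ∀ x, g x ∈ Set.Icc (0 : ℝ) 1) {v : (κ ⊕ (κ ⊕ ρ) → X) → ℝ}
    (hv : v ∈ stdSimplex ℝ (κ ⊕ (κ ⊕ ρ) → X)) (hvp : ∀ D, v D ≤ exp u * prodWeight p D)
    (hvx : Exchangeable v) :
    v ⬝ᵥ maxDeviation p hG
      ≤ v ⬝ᵥ (fun D ↦ √(2 * log #(patterns G D) / Fintype.card κ))
        + √(u / (2 * Fintype.card (κ ⊕ ρ))) := by
  have hmax (y : κ → X) : ∃ g ∈ G, maxDeviation p hG y = p ⬝ᵥ g - empMean g y :=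
    exists_mem_eq_sup' hG _
  choose g hgG hg using hmax
  let train : (κ ⊕ (κ ⊕ ρ) → X) → ℝ := fun D ↦ empMean (g (D ∘ Sum.inl)) (D ∘ Sum.inl)
  let fresh : (κ ⊕ (κ ⊕ ρ) → X) → ℝ := fun D ↦
    empMean (g (D ∘ Sum.inl)) (D ∘ Sum.inr ∘ Sum.inl)
  let rest : (κ ⊕ (κ ⊕ ρ) → X) → ℝ := fun D ↦ empMean (g (D ∘ Sum.inl)) (D ∘ Sum.inr)
  let mean : (κ ⊕ (κ ⊕ ρ) → X) → ℝ := fun D ↦ p ⬝ᵥ g (D ∘ Sum.inl)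
  have hfresh : v ⬝ᵥ fresh = v ⬝ᵥ rest := hvx.dotProduct_empMean_inr_comp g Sum.inl
  have hgap : v ⬝ᵥ (fresh - train)
      ≤ v ⬝ᵥ fun D ↦ √(2 * log #(patterns G D) / Fintype.card κ) :=
    calc v ⬝ᵥ (fresh - train) ≤ v ⬝ᵥ blockGap hG :=
          dotProduct_le_dotProduct_of_nonneg_left (fun D ↦ le_sup'
            (fun g ↦ empMean g (D ∘ Sum.inr ∘ Sum.inl) - empMean g (D ∘ Sum.inl)) (hgG _)) hv.1
      _ = v ⬝ᵥ fun D ↦ 𝔼 ε : κ → ℤˣ, blockGap hG (D ∘ blockSwap ε) :=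
          (hvx.dotProduct_expect_comp blockSwap _).symm
      _ ≤ _ := dotProduct_le_dotProduct_of_nonneg_left
          (fun D ↦ expect_blockGap_blockSwap_le hG hG1 D) hv.1
  calc v ⬝ᵥ maxDeviation p hG ≤ v ⬝ᵥ fun D ↦ maxDeviation p hG (D ∘ Sum.inl) :=
        hvx.dotProduct_maxDeviation_le_comp hG hv.1 Sum.inl
    _ = v ⬝ᵥ (mean - train) := congrArg (v ⬝ᵥ ·) (funext fun D ↦ hg (D ∘ Sum.inl))
    _ = v ⬝ᵥ (fresh - train) + v ⬝ᵥ (mean - rest) := by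
        simp only [dotProduct_sub, hfresh]
        ring
    _ ≤ _ := add_le_add hgap (dotProduct_deviation_inr_le hp hv hvp fun y ↦ hG1 _ (hgG y))

theorem maxDeviation_le_sqrt_log_add [Fintype ι] [Nonempty ι] (hp : p ∈ stdSimplex ℝ X)
    (hG : G.Nonempty) (hG1 : ∀ g ∈ G, ∀ x, g x ∈ Set.Icc (0 : ℝ) 1) {g : X → ℝ} (hg : g ∈ G)
    (hgmax : ∀ f ∈ G, p ⬝ᵥ f ≤ p ⬝ᵥ g) (D : ι → X) :
    maxDeviation p hG D ≤ √(6 * log #(patterns G D)) + (p ⬝ᵥ g - empMean g D) := by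
  refine sup'_le _ _ fun f hf ↦ ?_
  rcases le_or_gt #(patterns G D) 1 with hN | hN
  · have hfg : f ∘ D = g ∘ D :=
      card_le_one.mp hN _ (comp_mem_patterns hf D) _ (comp_mem_patterns hg D)
    have hmean : empMean f D = empMean g D := expect_congr rfl fun i _ ↦ congrFun hfg i
    linarith [hgmax f hf, sqrt_nonneg (6 * log #(patterns G D))]
  · have hlog : log 2 ≤ log #(patterns G D) :=
      log_le_log two_pos (by exact_mod_cast hN)
    have htwo : 2 ≤ √(6 * log #(patterns G D)) :=
      le_sqrt_of_sq_le (by linarith [log_two_gt_d9])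
    have hf1 : p ⬝ᵥ f ≤ 1 := by
      rw [← dotProduct_const_of_mem_stdSimplex hp 1]
      exact dotProduct_le_dotProduct_of_nonneg_left (fun x ↦ (hG1 f hf x).2) hp.1
    have hg0 : 0 ≤ p ⬝ᵥ g := dotProduct_nonneg_of_nonneg hp.1 fun x ↦ (hG1 g hg x).1
    linarith [(empMean_mem_Icc (hG1 f hf) D).1, (empMean_mem_Icc (hG1 g hg) D).2]

theorem dotProduct_maxDeviation_le_sqrt_log_add [Fintype ι] [DecidableEq ι] [Nonempty ι]
    (hp : p ∈ stdSimplex ℝ X) (hG : G.Nonempty) (hG1 : ∀ g ∈ G, ∀ x, g x ∈ Set.Icc (0 : ℝ) 1)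
    {v : (ι → X) → ℝ} (hv : v ∈ stdSimplex ℝ (ι → X))
    (hvp : ∀ D, v D ≤ exp u * prodWeight p D) :
    v ⬝ᵥ maxDeviation p hG
      ≤ v ⬝ᵥ (fun D ↦ √(6 * log #(patterns G D))) + √(u / (2 * Fintype.card ι)) := by
  obtain ⟨g, hg, hgmax⟩ := G.exists_max_image (p ⬝ᵥ ·) hG
  have hdev : v ⬝ᵥ (fun D ↦ p ⬝ᵥ g - empMean g D) ≤ √(u / (2 * Fintype.card ι)) := by
    have : (0 : ℝ) < Fintype.card ι := by exact_mod_cast Fintype.card_pos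
    convert dotProduct_le_sqrt_of_mgf_le_of_le_exp_mul hv hvp (by positivity)
      (prodWeight_dotProduct_exp_deviation_le hp (hG1 g hg)) using 2
    field_simp
    ring
  calc v ⬝ᵥ maxDeviation p hG
      ≤ v ⬝ᵥ ((fun D ↦ √(6 * log #(patterns G D))) + fun D ↦ p ⬝ᵥ g - empMean g D) :=
        dotProduct_le_dotProduct_of_nonneg_left
          (maxDeviation_le_sqrt_log_add hp hG hG1 hg hgmax) hv.1
    _ ≤ _ := by
        rw [dotProduct_add]
        gcongr

theorem comp_arrowCongr_symm_dotProduct [Fintype ι] [DecidableEq ι] [Fintype κ] [DecidableEq κ]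
    (v : (ι → X) → ℝ) (Φ : (κ → X) → ℝ) (e : κ ≃ ι) :
    (fun D ↦ v (D ∘ e.symm)) ⬝ᵥ Φ = v ⬝ᵥ fun D ↦ Φ (D ∘ e) :=
  comp_equiv_symm_dotProduct v Φ (e.arrowCongr (Equiv.refl X)).symm

theorem dotProduct_maxDeviation_le_of_blockEquiv [Fintype ι] [DecidableEq ι] [Fintype κ]
    [Fintype ρ] [Nonempty κ] (e : κ ⊕ (κ ⊕ ρ) ≃ ι)
    (hp : p ∈ stdSimplex ℝ X) (hG : G.Nonempty) (hG1 : ∀ g ∈ G, ∀ x, g x ∈ Set.Icc (0 : ℝ) 1)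
    {v : (ι → X) → ℝ} (hv : v ∈ stdSimplex ℝ (ι → X))
    (hvp : ∀ D, v D ≤ exp u * prodWeight p D) (hvx : Exchangeable v) :
    v ⬝ᵥ maxDeviation p hG
      ≤ v ⬝ᵥ (fun D ↦ √(2 * log #(patterns G D) / Fintype.card κ))
        + √(u / (2 * Fintype.card (κ ⊕ ρ))) := by
  have hv' : (fun D ↦ v (D ∘ e.symm)) ∈ stdSimplex ℝ (κ ⊕ (κ ⊕ ρ) → X) := by
    refine ⟨fun D ↦ hv.1 _, ?_⟩
    rw [← dotProduct_one, comp_arrowCongr_symm_dotProduct]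
    exact dotProduct_const_of_mem_stdSimplex hv 1
  have hblocks := dotProduct_maxDeviation_le_of_blocks hp hG hG1 hv'
    (fun D ↦ (hvp _).trans_eq (by rw [prodWeight_comp_equiv]))
    fun τ D ↦ by simpa [Function.comp_def] using hvx (e.symm.trans (τ.trans e)) (D ∘ e.symm)
  simpa only [comp_arrowCongr_symm_dotProduct, maxDeviation_comp_equiv, card_patterns_comp_equiv]
    using hblocks

theorem dotProduct_maxDeviation_le [Fintype ι] [DecidableEq ι] [Nonempty ι]
    (hp : p ∈ stdSimplex ℝ X) (hG : G.Nonempty) (hG1 : ∀ g ∈ G, ∀ x, g x ∈ Set.Icc (0 : ℝ) 1)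
    (hu : 0 ≤ u) {v : (ι → X) → ℝ} (hv : v ∈ stdSimplex ℝ (ι → X))
    (hvp : ∀ D, v D ≤ exp u * prodWeight p D) (hvx : Exchangeable v) :
    v ⬝ᵥ maxDeviation p hG
      ≤ v ⬝ᵥ (fun D ↦ √(6 * log #(patterns G D) / Fintype.card ι))
        + √(u / Fintype.card ι) := by
  set n := Fintype.card ι with hn
  obtain hn1 | hn2 : n = 1 ∨ 2 ≤ n := by have := Fintype.card_pos (α := ι); omega
  · have h1 := dotProduct_maxDeviation_le_sqrt_log_add hp hG hG1 hv hvp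
    simp only [← hn, hn1, Nat.cast_one, mul_one, div_one] at h1 ⊢
    exact h1.trans (by gcongr; linarith)
  -- The constant `6` comes from `n ≤ 3 * k`, which fails for `k = n / 2` only when `n = 1`.
  set k := n / 2
  set r := n % 2
  have hcard : Fintype.card (Fin k ⊕ (Fin k ⊕ Fin r)) = n := by
    simp only [Fintype.card_sum, Fintype.card_fin]
    omega
  have : Nonempty (Fin k) := ⟨0, by omega⟩
  have hk : (n : ℝ) ≤ 3 * k := by exact_mod_cast (by omega : n ≤ 3 * k)
  have hkr : (n : ℝ) ≤ 2 * (k + r : ℕ) := by exact_mod_cast (by omega : n ≤ 2 * (k + r))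
  have hn0 : (0 : ℝ) < n := by exact_mod_cast (by omega : 0 < n)
  have hblocks := dotProduct_maxDeviation_le_of_blockEquiv (Fintype.equivOfCardEq hcard) hp hG hG1
    hv hvp hvx
  simp only [Fintype.card_sum, Fintype.card_fin] at hblocks
  refine hblocks.trans (add_le_add (dotProduct_le_dotProduct_of_nonneg_left (fun D ↦ ?_) hv.1) ?_)
  · have := log_natCast_nonneg #(patterns G D)
    have hk0 : (0 : ℝ) < k := by linarith
    apply sqrt_le_sqrt
    rw [div_le_div_iff₀ hk0 hn0]
    nlinarith
  · gcongr

end TailBound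

section Conditioning

variable {Ω : Type*} {w : Ω → ℝ} {B : Finset Ω} {u : ℝ}

/-- The weight `w` conditioned on the event `B`; it is `0` if `B` has weight `0`. -/
noncomputable def condWeight (w : Ω → ℝ) (B : Finset Ω) (ω : Ω) : ℝ :=
  if ω ∈ B then w ω / ∑ ω' ∈ B, w ω' else 0

theorem condWeight_mem_stdSimplex [Fintype Ω] (hw : 0 ≤ w) (hB : 0 < ∑ ω ∈ B, w ω) :
    condWeight w B ∈ stdSimplex ℝ Ω := by
  refine ⟨fun ω ↦ ?_, ?_⟩
  · unfold condWeight
    split_ifs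
    exacts [div_nonneg (hw ω) hB.le, le_rfl]
  · simp only [condWeight, sum_ite_mem, univ_inter]
    rw [← sum_div, div_self hB.ne']

theorem condWeight_le_exp_mul (hw : 0 ≤ w) (hB : exp (-u) ≤ ∑ ω ∈ B, w ω) (ω : Ω) :
    condWeight w B ω ≤ exp u * w ω := by
  unfold condWeight
  split_ifs
  · calc w ω / ∑ ω' ∈ B, w ω' ≤ w ω / exp (-u) :=
          div_le_div_of_nonneg_left (hw ω) (exp_pos _) hB
      _ = exp u * w ω := by rw [exp_neg, div_inv_eq_mul, mul_comm]
  · exact mul_nonneg (exp_pos u).le (hw ω)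

theorem condWeight_dotProduct_lt [Fintype Ω] {a b : Ω → ℝ} (hw : 0 ≤ w)
    (hB : 0 < ∑ ω ∈ B, w ω) (hab : ∀ ω ∈ B, a ω < b ω) :
    condWeight w B ⬝ᵥ a < condWeight w B ⬝ᵥ b := by
  obtain ⟨ω, hω, hwω⟩ := exists_lt_of_sum_lt (s := B) (f := 0) (g := w) (by simpa using hB)
  have restrict (c : Ω → ℝ) : condWeight w B ⬝ᵥ c = ∑ ω ∈ B, w ω / (∑ ω' ∈ B, w ω') * c ω := by
    simp only [dotProduct, condWeight, ite_mul, zero_mul, sum_ite_mem, univ_inter]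
  rw [restrict, restrict]
  exact sum_lt_sum
    (fun ω hω ↦ mul_le_mul_of_nonneg_left (hab ω hω).le (div_nonneg (hw ω) hB.le))
    ⟨ω, hω, mul_lt_mul_of_pos_left (hab ω hω) (div_pos hwω hB)⟩

theorem exchangeable_prodWeight {X ι : Type*} [Fintype ι] (p : X → ℝ) :
    Exchangeable (prodWeight p : (ι → X) → ℝ) :=
  fun τ D ↦ prodWeight_comp_equiv D τ

theorem Exchangeable.condWeight {X ι : Type*} {w : (ι → X) → ℝ} (hw : Exchangeable w)
    {B : Finset (ι → X)} (hB : ∀ (τ : Equiv.Perm ι) D, D ∘ τ ∈ B ↔ D ∈ B) :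
    Exchangeable (condWeight w B) := fun τ D ↦ by
  simp only [_root_.condWeight, hB, hw τ D]

theorem sum_prodWeight_lt_maxDeviation_le {X ι : Type*} [Fintype X] [Fintype ι] [DecidableEq ι]
    [Nonempty ι] {p : X → ℝ} {G : Finset (X → ℝ)} (hp : p ∈ stdSimplex ℝ X) (hG : G.Nonempty)
    (hG1 : ∀ g ∈ G, ∀ x, g x ∈ Set.Icc (0 : ℝ) 1) (hu : 0 ≤ u) :
    ∑ D : ι → X with √(6 * log #(patterns G D) / Fintype.card ι) + √(u / Fintype.card ι)
      < maxDeviation p hG D, prodWeight p D ≤ exp (-u) := by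
  set B : Finset (ι → X) := {D | √(6 * log #(patterns G D) / Fintype.card ι)
    + √(u / Fintype.card ι) < maxDeviation p hG D} with hB_def
  by_contra! hB
  have hw : 0 ≤ (prodWeight p : (ι → X) → ℝ) := (prodWeight_mem_stdSimplex hp).1
  have hB0 : 0 < ∑ D ∈ B, prodWeight p D := (exp_pos _).trans hB
  have hB_comp (τ : Equiv.Perm ι) (D : ι → X) : D ∘ τ ∈ B ↔ D ∈ B := by
    simp only [hB_def, mem_filter_univ, card_patterns_comp_equiv, maxDeviation_comp_equiv]
  have hv := condWeight_mem_stdSimplex hw hB0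
  have hlt : condWeight (prodWeight p) B ⬝ᵥ
      ((fun D ↦ √(6 * log #(patterns G D) / Fintype.card ι)) + fun _ ↦ √(u / Fintype.card ι))
      < condWeight (prodWeight p) B ⬝ᵥ maxDeviation p hG :=
    condWeight_dotProduct_lt hw hB0 fun D hD ↦ (mem_filter.mp hD).2
  rw [dotProduct_add, dotProduct_const_of_mem_stdSimplex hv] at hlt
  exact hlt.not_ge <| dotProduct_maxDeviation_le hp hG hG1 hu hv
    (condWeight_le_exp_mul hw hB.le) ((exchangeable_prodWeight p).condWeight hB_comp)

theorem one_sub_le_sum_ite [Fintype Ω] (hw : w ∈ stdSimplex ℝ Ω) {δ : ℝ} {P Q : Ω → Prop}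
    [DecidablePred P] [DecidablePred Q] (hP : ∑ ω with P ω, w ω ≤ δ) (hPQ : ∀ ω, ¬P ω → Q ω) :
    1 - δ ≤ ∑ ω, if Q ω then w ω else 0 := by
  have hsplit := sum_filter_add_sum_filter_not univ P w
  have hle : ∑ ω with ¬P ω, w ω ≤ ∑ ω with Q ω, w ω :=
    sum_le_sum_of_subset_of_nonneg (monotone_filter_right _ fun ω _ ↦ hPQ ω) fun ω _ _ ↦ hw.1 ω
  rw [← sum_filter]
  linarith [hw.2]

end Conditioning

section EffectiveInformation

theorem card_patterns_mul_card_pow_le {X ι β : Type*} [Fintype X] [Fintype ι] [Fintype β]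
    [DecidableEq β] (F : Finset (X → β)) (D : ι → X) :
    #(patterns F D) * Fintype.card β ^ Fintype.card X
      ≤ #{σ : X → β | ∃ f ∈ F, f ∘ D = σ ∘ D} * Fintype.card β ^ Fintype.card ι := by
  let E : Finset (X → β) := {σ | ∃ f ∈ F, f ∘ D = σ ∘ D}
  have extend_comp {b : ι → β} (hb : b ∈ patterns F D) (τ : X → β) :
      Function.extend D b τ ∘ D = b := by
    obtain ⟨f, -, rfl⟩ := mem_patterns.mp hb
    exact Function.FactorsThrough.extend_comp τ fun _ _ h ↦ congrArg f h
  have hcard : #(patterns F D ×ˢ (univ : Finset (X → β))) ≤ #(E ×ˢ (univ : Finset (ι → β))) := by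
    -- The first component keeps the values of `τ` off the sample, the second those on it.
    refine card_le_card_of_injOn (fun q ↦ (Function.extend D q.1 q.2, q.2 ∘ D)) ?_ ?_
    · rintro ⟨b, τ⟩ hb
      have hbF := (mem_product.mp hb).1
      refine mem_product.mpr ⟨(mem_filter_univ _).mpr ?_, mem_univ _⟩
      simpa only [extend_comp hbF, mem_patterns] using hbF
    · rintro ⟨b, τ⟩ hb ⟨b', τ'⟩ hb' h
      obtain ⟨hext, hτ⟩ := Prod.mk.inj h
      obtain rfl : b = b' := (extend_comp (mem_product.mp hb).1 τ).symm.trans <|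
        (congrArg (· ∘ D) hext).trans (extend_comp (mem_product.mp hb').1 τ')
      refine Prod.ext rfl (funext fun x ↦ ?_)
      by_cases hx : ∃ i, D i = x
      · obtain ⟨i, rfl⟩ := hx
        exact congrFun hτ i
      · simpa only [Function.extend_apply' _ _ _ hx] using congrFun hext x
  simpa only [card_product, card_univ, Fintype.card_fun] using hcard

variable {X : Type*} {l : ℕ} {F : Finset (X → Bool)} (hF : F.Nonempty)

theorem minRisk_eq_zero {f σ : X → Bool} {D : Fin l → X} (hf : f ∈ F) (hfσ : f ∘ D = σ ∘ D) :
    minRisk F hF D σ = 0 := by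
  have empRisk_nonneg (g : X → Bool) : 0 ≤ empRisk g D fun i ↦ σ (D i) :=
    mul_nonneg (by positivity) (sum_nonneg fun i _ ↦ by positivity)
  have hf0 : empRisk f D (fun i ↦ σ (D i)) = 0 := by
    have hfσ' (i : Fin l) : f (D i) = σ (D i) := congrFun hfσ i
    simp only [empRisk, hfσ', ne_eq, not_true_eq_false, if_false, sum_const_zero, mul_zero]
  exact le_antisymm ((inf'_le _ hf).trans_eq hf0) (le_inf' _ _ fun g _ ↦ empRisk_nonneg g)

theorem logb_card_patterns_div_le_one_sub_ei_div [Fintype X] (hl : 1 ≤ l) (D : Fin l → X) :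
    logb 2 #(patterns F D) / l ≤ 1 - ei (minRisk F hF D) 0 / l := by
  set N := #(patterns F D)
  set E : Finset (X → Bool) := {σ | minRisk F hF D σ = 0}
  have hcard : (N : ℝ) * 2 ^ Fintype.card X ≤ #E * 2 ^ l := by
    have hsub : #{σ : X → Bool | ∃ f ∈ F, f ∘ D = σ ∘ D} ≤ #E :=
      card_le_card <| monotone_filter_right _ fun σ _ ⟨_, hf, hfσ⟩ ↦ minRisk_eq_zero hF hf hfσ
    have hle := (card_patterns_mul_card_pow_le F D).trans (Nat.mul_le_mul_right _ hsub)
    rw [Fintype.card_bool, Fintype.card_fin] at hle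
    exact_mod_cast hle
  have hN0 : (0 : ℝ) < N := by exact_mod_cast (patterns_nonempty hF D).card_pos
  have hE0 : (0 : ℝ) < #E :=
    pos_of_mul_pos_left (lt_of_lt_of_le (by positivity) hcard) (by positivity)
  have logb_two_pow (n : ℕ) : logb 2 ((2 : ℝ) ^ n) = n := by
    rw [logb_pow, logb_self_eq_one one_lt_two, mul_one]
  have hlog := logb_le_logb_of_le one_lt_two (by positivity) hcard
  rw [logb_mul hN0.ne' (by positivity), logb_mul hE0.ne' (by positivity), logb_two_pow,
    logb_two_pow] at hlog
  have hei : ei (minRisk F hF D) 0 = Fintype.card X - logb 2 #E := by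
    rw [ei, Fintype.card_fun, Fintype.card_bool, Nat.cast_pow, Nat.cast_ofNat, logb_two_pow]
  have hl0 : (0 : ℝ) < l := by exact_mod_cast hl
  rw [hei, one_sub_div hl0.ne']
  gcongr
  linarith

end EffectiveInformation

section LossClass

variable {X : Type*}

/-- The `0`-`1` loss of the classifier `f` against the supervisor `σs`. -/
noncomputable def loss (σs f : X → Bool) (x : X) : ℝ :=
  if f x ≠ σs x then 1 else 0

theorem loss_mem_Icc (σs f : X → Bool) (x : X) : loss σs f x ∈ Set.Icc (0 : ℝ) 1 := by
  unfold loss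
  split_ifs <;> simp

/-- The loss functions of the classifiers in `F`; classes of real-valued functions are what the
deviation bounds apply to. -/
noncomputable def lossClass (σs : X → Bool) (F : Finset (X → Bool)) : Finset (X → ℝ) :=
  F.image (loss σs)

theorem lossClass_nonempty (σs : X → Bool) {F : Finset (X → Bool)} (hF : F.Nonempty) :
    (lossClass σs F).Nonempty :=
  hF.image _

theorem loss_mem_lossClass (σs : X → Bool) {F : Finset (X → Bool)} {f : X → Bool} (hf : f ∈ F) :
    loss σs f ∈ lossClass σs F :=
  mem_image_of_mem _ hf

theorem mem_Icc_of_mem_lossClass {σs : X → Bool} {F : Finset (X → Bool)} {g : X → ℝ}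
    (hg : g ∈ lossClass σs F) (x : X) : g x ∈ Set.Icc (0 : ℝ) 1 := by
  obtain ⟨f, -, rfl⟩ := mem_image.mp hg
  exact loss_mem_Icc σs f x

theorem risk_eq_dotProduct_loss [Fintype X] (p : X → ℝ) (σs f : X → Bool) :
    risk p σs f = p ⬝ᵥ loss σs f :=
  dotProduct_comm (loss σs f) p

theorem empRisk_eq_empMean_loss {l : ℕ} (σs f : X → Bool) (D : Fin l → X) :
    empRisk f D (fun i ↦ σs (D i)) = empMean (loss σs f) D := by
  rw [empMean, Fintype.expect_eq_sum_div_card, Fintype.card_fin, div_eq_inv_mul, ← one_div]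
  rfl

theorem risk_sub_empRisk_le_maxDeviation [Fintype X] {l : ℕ} (p : X → ℝ) (σs : X → Bool)
    {F : Finset (X → Bool)} (hF : F.Nonempty) (D : Fin l → X) {f : X → Bool} (hf : f ∈ F) :
    risk p σs f - empRisk f D (fun i ↦ σs (D i)) ≤ maxDeviation p (lossClass_nonempty σs hF) D := by
  rw [risk_eq_dotProduct_loss, empRisk_eq_empMean_loss]
  exact le_sup' (fun g ↦ p ⬝ᵥ g - empMean g D) (loss_mem_lossClass σs hf)

theorem card_patterns_lossClass_le {ι : Type*} (σs : X → Bool) (F : Finset (X → Bool))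
    (D : ι → X) : #(patterns (lossClass σs F) D) ≤ #(patterns F D) := by
  have : patterns (lossClass σs F) D = (patterns F D).image (loss (σs ∘ D)) := by
    rw [patterns, patterns, lossClass, image_image, image_image]
    rfl
  rw [this]
  exact card_image_le

theorem sqrt_log_card_patterns_le_sqrt_ei [Fintype X] {l : ℕ} (hl : 1 ≤ l) (σs : X → Bool)
    {F : Finset (X → Bool)} (hF : F.Nonempty) (D : Fin l → X) :
    √(6 * log #(patterns (lossClass σs F) D) / l)
      ≤ √(6 * log 2) * √(1 - ei (minRisk F hF D) 0 / l) := by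
  set N := #(patterns (lossClass σs F) D)
  have hN0 : (0 : ℝ) < N := by
    exact_mod_cast (patterns_nonempty (lossClass_nonempty σs hF) D).card_pos
  have hN : logb 2 N / l ≤ 1 - ei (minRisk F hF D) 0 / l := by
    refine le_trans ?_ (logb_card_patterns_div_le_one_sub_ei_div hF hl D)
    gcongr
    · exact one_lt_two
    · exact_mod_cast card_patterns_lossClass_le σs F D
  calc √(6 * log N / l) = √(6 * log 2 * (logb 2 N / l)) := by
        rw [logb]
        field_simp
    _ = √(6 * log 2) * √(logb 2 N / l) := sqrt_mul (by positivity) _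
    _ ≤ √(6 * log 2) * √(1 - ei (minRisk F hF D) 0 / l) := by gcongr

end LossClass

theorem information_theoretic_empirical_vc_bound_general {X : Type*} [Fintype X]
    (p : X → ℝ) (hp : ∀ x, 0 ≤ p x) (hp1 : ∑ x, p x = 1) (σs : X → Bool) {l : ℕ} (hl : 1 ≤ l)
    (F : Finset (X → Bool)) (hF : F.Nonempty) (δ : ℝ) (hδ0 : 0 < δ) (hδ1 : δ < 1) :
    1 - δ ≤ ∑ D : Fin l → X,
      if (∀ f ∈ F,
          risk p σs f ≤ empRisk f D (fun i ↦ σs (D i))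
            + √(6 * log 2) * √(1 - ei (minRisk F hF D) 0 / l)
            + √(log 2) * √((1 - logb 2 δ) / l))
        then ∏ i, p (D i) else 0 := by
  have : Nonempty (Fin l) := ⟨0, hl⟩
  have hδ_log : log δ < 0 := log_neg hδ0 hδ1
  have hconf : √(log 2) * √((1 - logb 2 δ) / l) = √((log 2 - log δ) / l) := by
    rw [← sqrt_mul (by positivity), logb]
    field_simp
  have hexp : exp (-(log 2 - log δ)) ≤ δ := by
    rw [neg_sub, exp_sub, exp_log hδ0, exp_log two_pos]
    linarith
  have htail := sum_prodWeight_lt_maxDeviation_le (ι := Fin l) (u := log 2 - log δ) ⟨hp, hp1⟩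
    (lossClass_nonempty σs hF) (fun _ ↦ mem_Icc_of_mem_lossClass)
    (by linarith [log_pos one_lt_two])
  rw [Fintype.card_fin] at htail
  refine one_sub_le_sum_ite (prodWeight_mem_stdSimplex ⟨hp, hp1⟩) (htail.trans hexp)
    fun D hD f hf ↦ ?_
  rw [hconf]
  linarith [not_lt.mp hD, risk_sub_empRisk_le_maxDeviation p σs hF D hf,
    sqrt_log_card_patterns_le_sqrt_ei hl σs hF D]

end UniformDeviation

/-- Information-theoretic empirical VC bound: with probability at least `1 - δ`
over the i.i.d. draw of `D` from `p`, if the entries of `D` are pairwise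
distinct then every `f ∈ F` satisfies
`R(f) ≤ R(f,D,L) + c₁√(1 - ei(𝐑_{F,D},0)/l) + c₂√((1 - log₂ δ)/l)`,
with `c₁ = √(6 ln 2)` and `c₂ = √(ln 2)`. -/
theorem information_theoretic_empirical_vc_bound
    {X : Type*} [Fintype X] [Nonempty X]
    (p : X → ℝ) (hp : ∀ x, 0 ≤ p x) (hp1 : ∑ x, p x = 1)
    (σs : X → Bool) {l : ℕ} (hl : 1 ≤ l)
    (F : Finset (X → Bool)) (hF : F.Nonempty)
    (δ : ℝ) (hδ0 : 0 < δ) (hδ1 : δ < 1) :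
    1 - δ ≤ ∑ D : Fin l → X,
      if (Function.Injective D → ∀ f ∈ F,
          risk p σs f ≤ empRisk f D (fun i => σs (D i))
            + Real.sqrt (6 * Real.log 2)
              * Real.sqrt (1 - ei (minRisk F hF D) 0 / l)
            + Real.sqrt (Real.log 2) * Real.sqrt ((1 - Real.logb 2 δ) / l))
        then ∏ i, p (D i) else 0 := by
  refine (information_theoretic_empirical_vc_bound_general p hp hp1 σs hl F hF δ hδ0 hδ1).trans ?_
  simp only [← sum_filter]
  exact sum_le_sum_of_subset_of_nonneg (monotone_filter_right _ fun D _ hD _ ↦ hD)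
    fun D _ _ ↦ prod_nonneg fun i _ ↦ hp _
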